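/- arXiv:2506.06468 — 2 statements merged into one kernel-verified Lean document; each statement's English description precedes it below -/
import Mathlib

section
/- Let ρ be the density of states of the Laplacian on ℤ^d, d ≥ 2, defined by ∫ f(σ) ρ(σ) dσ = (2π)^{-d} ∫_{𝕋^d} f(ω(ξ)) dξ for continuous f, where ω(ξ) = ∑ 2cos(ξ_j). Then ρ is supported on [-2d, 2d], for d ≥ 3 it is bounded: ρ(σ) ≤ C, for d = 2 it satisfies ρ(σ) ≤ C(1 + log(1/|σ|)), and for every ε > 0 there is c_ε > 0 with ρ(σ) ≥ c_ε on [-2d+ε, 2d-ε]. -/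
open MeasureTheory

noncomputable section

instance : Fact (0 < 2 * Real.pi) := ⟨by positivity⟩

noncomputable instance : MeasureTheory.MeasureSpace Real.Angle :=
  inferInstanceAs (MeasureTheory.MeasureSpace (AddCircle (2 * Real.pi)))

/-- The d-dimensional torus `𝕋^d = (ℝ/2πℤ)^d`. -/
abbrev Torus (d : ℕ) := Fin d → Real.Angle

/-- The symbol of the lattice Laplacian, `ω(ξ) = ∑_j 2 cos ξ_j`. -/
noncomputable def omegaT {d : ℕ} (ξ : Torus d) : ℝ := ∑ j, 2 * (ξ j).cos

open ENNReal Set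

instance angleBorel : BorelSpace Real.Angle :=
  inferInstanceAs (BorelSpace (AddCircle (2 * Real.pi)))

instance angleFinite : IsFiniteMeasure (volume : Measure Real.Angle) :=
  inferInstanceAs (IsFiniteMeasure (volume : Measure (AddCircle (2 * Real.pi))))

/-- arcsine density -/
def gR (s : ℝ) : ℝ := (Real.pi * √(4 - s ^ 2))⁻¹

/-- arcsine density, extended-valued -/
def gE (s : ℝ) : ℝ≥0∞ := ENNReal.ofReal (gR s)

/-- iterated convolutions -/
def RE : ℕ → ℝ → ℝ≥0∞
  | 0 => gE
  | (n + 1) => fun σ => ∫⁻ t, RE n (σ - t) * gE t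

lemma gE_meas : Measurable gE := by
  unfold gE gR; fun_prop

lemma RE_meas (n : ℕ) : Measurable (RE n) := by
  induction n with
  | zero => exact gE_meas
  | succ n ih =>
    refine Measurable.lintegral_prod_right' (f := fun p : ℝ × ℝ => RE n (p.1 - p.2) * gE p.2) ?_
    exact (ih.comp (measurable_fst.sub measurable_snd)).mul (gE_meas.comp measurable_snd)

lemma gR_zero {s : ℝ} (h : 2 ≤ |s|) : gR s = 0 := by
  unfold gR
  rw [Real.sqrt_eq_zero_of_nonpos]
  · simp
  · nlinarith [sq_abs s]

lemma gE_zero {s : ℝ} (h : 2 ≤ |s|) : gE s = 0 := by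
  simp [gE, gR_zero h]

lemma cos_meas : Measurable Real.Angle.cos := Real.Angle.continuous_cos.measurable

lemma half_int (f : ℝ → ℝ≥0∞) :
    ∫⁻ x in Ioo 0 Real.pi, f (2 * Real.cos x) = ENNReal.ofReal Real.pi * ∫⁻ s, f s * gE s := by
  have h1 := lintegral_image_eq_lintegral_abs_deriv_mul (s := Ioo 0 Real.pi)
    (f := fun x => 2 * Real.cos x) (f' := fun x => 2 * (- Real.sin x)) measurableSet_Ioo
    (fun x _ => ((Real.hasDerivAt_cos x).const_mul 2).hasDerivWithinAt)
    (fun x hx y hy h => Real.injOn_cos ⟨hx.1.le, hx.2.le⟩ ⟨hy.1.le, hy.2.le⟩ (by simpa using h))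
    (fun s => f s * gE s)
  have himg : (fun x => 2 * Real.cos x) '' Ioo 0 Real.pi = Ioo (-2) 2 := by
    ext s
    constructor
    · rintro ⟨x, hx, rfl⟩
      have h1 : Real.cos x < 1 := by
        have := Real.cos_lt_cos_of_nonneg_of_le_pi le_rfl hx.2.le hx.1
        simpa using this
      have h2 : -1 < Real.cos x := by
        have := Real.cos_lt_cos_of_nonneg_of_le_pi hx.1.le le_rfl hx.2
        simpa using this
      constructor <;> simp only <;> linarith
    · rintro ⟨h1, h2⟩
      refine ⟨Real.arccos (s / 2), ⟨Real.arccos_pos.2 (by linarith), ?_⟩, ?_⟩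
      · rw [Real.arccos_lt_pi]; linarith
      · simp only
        rw [Real.cos_arccos (by linarith) (by linarith)]; ring
  rw [himg] at h1
  have h2 : ∫⁻ s in Ioo (-2:ℝ) 2, f s * gE s = ∫⁻ s, f s * gE s := by
    apply setLIntegral_eq_of_support_subset
    intro s hs
    by_contra hc
    apply hs
    have : 2 ≤ |s| := by
      by_contra h
      push Not at h
      exact hc (abs_lt.1 h)
    simp [gE_zero this]
  rw [h2] at h1
  rw [h1, ← lintegral_const_mul' _ _ ofReal_ne_top]
  apply setLIntegral_congr_fun measurableSet_Ioo
  intro x hx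
  have hs := Real.sin_pos_of_pos_of_lt_pi hx.1 hx.2
  have hg : gR (2 * Real.cos x) = (Real.pi * (2 * Real.sin x))⁻¹ := by
    unfold gR
    have : 4 - (2 * Real.cos x) ^ 2 = (2 * Real.sin x) ^ 2 := by
      nlinarith [Real.sin_sq_add_cos_sq x]
    rw [this, Real.sqrt_sq (by positivity)]
  simp only
  rw [gE, hg, mul_left_comm (ENNReal.ofReal |_|), mul_left_comm (ENNReal.ofReal Real.pi), ← ofReal_mul (by positivity), ← ofReal_mul (by positivity)]
  have : Real.pi * (|2 * -Real.sin x| * (Real.pi * (2 * Real.sin x))⁻¹) = 1 := by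
    rw [mul_neg, abs_neg, abs_of_pos (by positivity)]
    field_simp
  rw [this]; simp

lemma one_dim (f : ℝ → ℝ≥0∞) :
    ∫⁻ x : Real.Angle, f (2 * x.cos) = ENNReal.ofReal (2 * Real.pi) * ∫⁻ s, f s * gE s := by
  have h := AddCircle.lintegral_preimage (2 * Real.pi) (-Real.pi)
    (fun x : AddCircle (2 * Real.pi) => f (2 * Real.Angle.cos x))
  have e : -Real.pi + 2 * Real.pi = Real.pi := by ring
  rw [e] at h
  refine h.symm.trans ?_
  have h3 : ∫⁻ a in Ioc (-Real.pi) Real.pi, f (2 * Real.Angle.cos (a : AddCircle (2 * Real.pi)))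
     = ∫⁻ a in Ioc (-Real.pi) Real.pi, f (2 * Real.cos a) := rfl
  rw [h3]
  have hp := Real.pi_pos
  rw [← Ioc_union_Ioc_eq_Ioc (b := 0) (by linarith) hp.le,
    lintegral_union measurableSet_Ioc (by
      rw [Set.disjoint_left]; rintro x hx hy; exact absurd hx.2 (not_le.2 hy.1))]
  have h4 : ∫⁻ a in Ioc (-Real.pi) 0, f (2 * Real.cos a) = ∫⁻ a in Ioo 0 Real.pi, f (2 * Real.cos a) := by
    rw [← restrict_Ioo_eq_restrict_Ioc, ← lintegral_indicator measurableSet_Ioo,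
      ← lintegral_indicator measurableSet_Ioo, ← lintegral_neg_eq_self]
    congr 1; ext x
    simp only [indicator, mem_Ioo, Real.cos_neg]
    congr 1
    apply propext
    constructor <;> rintro ⟨h1, h2⟩ <;> constructor <;> linarith
  rw [h4, ← restrict_Ioo_eq_restrict_Ioc, half_int, ← add_mul, ← ofReal_add hp.le hp.le]
  ring_nf

lemma omega_meas {d : ℕ} : Measurable (omegaT : Torus d → ℝ) := by
  unfold omegaT
  exact Finset.measurable_sum _ fun j _ => (cos_meas.comp (measurable_pi_apply j)).const_mul 2

lemma torus_int (n : ℕ) : ∀ (f : ℝ → ℝ≥0∞), Measurable f →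
    ∫⁻ ξ : Torus (n + 1), f (omegaT ξ) =
      ENNReal.ofReal (2 * Real.pi) ^ (n + 1) * ∫⁻ s, f s * RE n s := by
  induction n with
  | zero =>
    intro f hf
    have := (volume_preserving_funUnique (Fin 1) Real.Angle).lintegral_comp
      (f := fun x => f (2 * x.cos)) (hf.comp (cos_meas.const_mul 2))
    rw [one_dim] at this
    simp only [zero_add, pow_one, RE]
    rw [← this]
    congr 1; ext ξ
    simp [omegaT]
  | succ n ih =>
    intro f hf
    have hk : ENNReal.ofReal (2 * Real.pi) ^ (n + 1) ≠ ∞ := pow_ne_top ofReal_ne_top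
    have hm0 : Measurable fun p : Real.Angle × Torus (n + 1) => f (2 * p.1.cos + omegaT p.2) :=
      hf.comp (((cos_meas.comp measurable_fst).const_mul 2).add (omega_meas.comp measurable_snd))
    have h1 := (volume_preserving_piFinSuccAbove (fun _ : Fin (n + 2) => Real.Angle) 0).lintegral_comp
      (f := fun p => f (2 * p.1.cos + omegaT p.2))
      hm0
    have h2 : ∫⁻ ξ : Torus (n + 1 + 1), f (omegaT ξ) =
        ∫⁻ p : Real.Angle × Torus (n + 1), f (2 * p.1.cos + omegaT p.2) := by
      refine Eq.trans ?_ h1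
      congr 1; ext ξ
      simp [omegaT, Fin.sum_univ_succ, MeasurableEquiv.piFinSuccAbove, Fin.tail]
    rw [h2, Measure.volume_eq_prod, lintegral_prod _ hm0.aemeasurable]
    have h3 : ∀ x : Real.Angle, ∫⁻ y : Torus (n + 1), f (2 * x.cos + omegaT y) =
        ENNReal.ofReal (2 * Real.pi) ^ (n + 1) * ∫⁻ s, f s * RE n (s - 2 * x.cos) := by
      intro x
      rw [ih (fun s => f (2 * x.cos + s)) (hf.comp (measurable_const.add measurable_id))]
      congr 1
      rw [← lintegral_add_left_eq_self (fun s => f s * RE n (s - 2 * x.cos)) (2 * x.cos)]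
      simp
    simp_rw [h3]
    rw [lintegral_const_mul' _ _ hk,
      one_dim (fun t => ∫⁻ s, f s * RE n (s - t)), ← mul_assoc, ← pow_succ]
    congr 1
    have hm : Measurable fun p : ℝ × ℝ => f p.2 * RE n (p.2 - p.1) * gE p.1 :=
      ((hf.comp measurable_snd).mul ((RE_meas n).comp (measurable_snd.sub measurable_fst))).mul
        (gE_meas.comp measurable_fst)
    calc ∫⁻ t, (∫⁻ s, f s * RE n (s - t)) * gE t = ∫⁻ t, ∫⁻ s, f s * RE n (s - t) * gE t := by
          congr 1; ext t
          exact (lintegral_mul_const' (gE t) _ ofReal_ne_top).symm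
      _ = ∫⁻ s, ∫⁻ t, f s * RE n (s - t) * gE t := lintegral_lintegral_swap hm.aemeasurable
      _ = _ := by
          congr 1; ext s
          simp only [RE, mul_assoc]
          exact lintegral_const_mul _ (((RE_meas n).comp (measurable_const.sub measurable_id)).mul gE_meas)

lemma RE_support (n : ℕ) : ∀ σ : ℝ, 2 * ((n : ℝ) + 1) ≤ |σ| → RE n σ = 0 := by
  induction n with
  | zero => intro σ h; exact gE_zero (by simpa using h)
  | succ n ih =>
    intro σ h
    simp only [RE]
    rw [← lintegral_zero (μ := (volume : Measure ℝ))]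
    congr 1; ext t
    by_cases ht : 2 ≤ |t|
    · simp [gE_zero ht]
    · rw [ih, zero_mul]
      push Not at ht
      push_cast at h
      have := abs_sub_abs_le_abs_sub σ t
      linarith

lemma gR_lower {s : ℝ} (h : |s| < 2) : (2 * Real.pi)⁻¹ ≤ gR s := by
  unfold gR
  have hs : 0 < 4 - s ^ 2 := by nlinarith [sq_abs s, abs_nonneg s]
  have h2 : √(4 - s ^ 2) ≤ 2 := by
    rw [Real.sqrt_le_left (by norm_num)]; nlinarith [sq_nonneg s]
  have := Real.sqrt_pos.2 hs
  have hp := Real.pi_pos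
  apply inv_anti₀ (by positivity)
  nlinarith

lemma RE_lower (n : ℕ) : ∀ ε : ℝ, 0 < ε → ∃ c : ℝ, 0 < c ∧
    ∀ σ : ℝ, |σ| ≤ 2 * ((n : ℝ) + 1) - ε → ENNReal.ofReal c ≤ RE n σ := by
  have hp := Real.pi_pos
  induction n with
  | zero =>
    intro ε hε
    refine ⟨(2 * Real.pi)⁻¹, by positivity, fun σ h => ?_⟩
    exact ofReal_le_ofReal (gR_lower (by simp at h; linarith))
  | succ n ih =>
    intro ε hε
    set δ : ℝ := ε / (2 * ((n : ℝ) + 2)) with hδ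
    have hδ0 : 0 < δ := by positivity
    have hεδ : ε = 2 * ((n : ℝ) + 2) * δ := by rw [hδ]; field_simp
    obtain ⟨c, hc, H⟩ := ih δ hδ0
    refine ⟨c * (2 * Real.pi)⁻¹ * (2 * δ), by positivity, fun σ h => ?_⟩
    push_cast at h
    set t0 : ℝ := σ / ((n : ℝ) + 2) with ht0
    have hn : (0 : ℝ) < (n : ℝ) + 2 := by positivity
    have hσ : σ = ((n : ℝ) + 2) * t0 := by rw [ht0]; field_simp
    have ht : |t0| ≤ 2 - 2 * δ := by
      rw [ht0, abs_div, abs_of_pos hn, div_le_iff₀ hn]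
      nlinarith
    have hst : |σ - t0| ≤ ((n : ℝ) + 1) * (2 - 2 * δ) := by
      have : σ - t0 = ((n : ℝ) + 1) * t0 := by rw [hσ]; ring
      rw [this, abs_mul, abs_of_pos (by positivity)]
      gcongr
    calc ENNReal.ofReal (c * (2 * Real.pi)⁻¹ * (2 * δ))
        = ∫⁻ t in Icc (t0 - δ) (t0 + δ), ENNReal.ofReal (c * (2 * Real.pi)⁻¹) := by
          rw [setLIntegral_const, Real.volume_Icc, ← ofReal_mul (by positivity)]
          congr 1; ring
      _ ≤ ∫⁻ t in Icc (t0 - δ) (t0 + δ), RE n (σ - t) * gE t := by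
          apply setLIntegral_mono' measurableSet_Icc
          intro t htm
          have h1 : |t - t0| ≤ δ := by rw [abs_le]; constructor <;> linarith [htm.1, htm.2]
          rw [ofReal_mul hc.le]
          refine mul_le_mul' (H _ ?_) (ofReal_le_ofReal (gR_lower ?_))
          · have := abs_sub_le σ t0 t
            rw [abs_sub_comm t0 t] at this
            have hn0 : (0 : ℝ) ≤ n := by positivity
            nlinarith
          · have := abs_sub_abs_le_abs_sub t t0
            linarith
      _ ≤ _ := setLIntegral_le_lintegral _ _

lemma pow_int {r a : ℝ} (hr : -1 < r) (ha : 0 ≤ a) :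
    ∫⁻ v in Ioc 0 a, ENNReal.ofReal (v ^ r) = ENNReal.ofReal (a ^ (r + 1) / (r + 1)) := by
  have hi : IntegrableOn (fun v : ℝ => v ^ r) (Ioc 0 a) :=
    (intervalIntegrable_iff_integrableOn_Ioc_of_le ha).1 (intervalIntegral.intervalIntegrable_rpow' hr)
  rw [← ofReal_integral_eq_lintegral_ofReal hi, ← intervalIntegral.integral_of_le ha,
    integral_rpow (Or.inl hr), Real.zero_rpow (by linarith), sub_zero]
  filter_upwards [ae_restrict_mem measurableSet_Ioc] with v hv
  exact Real.rpow_nonneg hv.1.le _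

lemma inv_int {a b : ℝ} (ha : 0 < a) (hab : a ≤ b) :
    ∫⁻ v in Ioc a b, ENNReal.ofReal (v⁻¹) = ENNReal.ofReal (Real.log (b / a)) := by
  have hi : IntegrableOn (fun v : ℝ => v⁻¹) (Ioc a b) :=
    (intervalIntegrable_iff_integrableOn_Ioc_of_le hab).1
      (intervalIntegral.intervalIntegrable_inv (fun x hx => by
        rw [uIcc_of_le hab] at hx; linarith [hx.1]) continuousOn_id)
  rw [← ofReal_integral_eq_lintegral_ofReal hi, ← intervalIntegral.integral_of_le hab,
    integral_inv_of_pos ha (by linarith)]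
  filter_upwards [ae_restrict_mem measurableSet_Ioc] with v hv
  exact inv_nonneg.2 (by linarith [hv.1])

lemma half_pow {a : ℝ} (ha : 0 < a) :
    ∫⁻ v in Ioc 0 a, ENNReal.ofReal ((√(a * v))⁻¹) = 2 := by
  have : ∀ v ∈ Ioc 0 a, ENNReal.ofReal ((√(a * v))⁻¹) =
      ENNReal.ofReal ((√a)⁻¹) * ENNReal.ofReal (v ^ (-(1/2) : ℝ)) := by
    intro v hv
    rw [← ofReal_mul (by positivity), Real.sqrt_mul ha.le, mul_inv, Real.rpow_neg hv.1.le,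
      ← Real.sqrt_eq_rpow]
  rw [setLIntegral_congr_fun measurableSet_Ioc this, lintegral_const_mul' _ _ ofReal_ne_top,
    pow_int (by norm_num) ha.le, ← ofReal_mul (by positivity)]
  have : (√a)⁻¹ * (a ^ (-(1/2) + 1 : ℝ) / (-(1/2) + 1)) = 2 := by
    have h0 := Real.sqrt_pos.2 ha
    rw [show (-(1/2) + 1 : ℝ) = 1/2 by norm_num, ← Real.sqrt_eq_rpow]
    field_simp
  rw [this]; norm_num

/-- majorant in dimension two -/
def FE (σ : ℝ) : ℝ → ℝ≥0∞ :=
  indicator (Ioc 0 (2 - σ / 2)) fun v => ENNReal.ofReal ((√(2 * (2 - σ / 2) * v * (σ + v)))⁻¹)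

lemma FE_meas (σ : ℝ) : Measurable (FE σ) := by
  unfold FE
  exact Measurable.indicator (by fun_prop) measurableSet_Ioc

lemma FE_int {σ : ℝ} (h0 : 0 < σ) (h4 : σ < 4) :
    ∫⁻ v, FE σ v ≤ ENNReal.ofReal (3 + |Real.log σ|) := by
  unfold FE
  rw [lintegral_indicator measurableSet_Ioc]
  set L := 2 - σ / 2 with hL
  have hL0 : 0 < L := by linarith
  by_cases h2 : 2 ≤ σ
  · calc _ ≤ ∫⁻ v in Ioc 0 L, ENNReal.ofReal ((√(L * v))⁻¹) := by
          apply setLIntegral_mono' measurableSet_Ioc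
          intro v hv
          have hv0 := hv.1
          apply ofReal_le_ofReal
          apply inv_anti₀ (Real.sqrt_pos.2 (by positivity))
          apply Real.sqrt_le_sqrt
          have : 0 < L * v := by positivity
          nlinarith
      _ = 2 := half_pow hL0
      _ = ENNReal.ofReal 2 := by norm_num
      _ ≤ _ := ofReal_le_ofReal (by linarith [abs_nonneg (Real.log σ)])
  · push Not at h2
    have hL1 : 1 ≤ L := by linarith
    have key : ∀ v, σ ≤ v ∨ v ≤ σ := fun v => le_total _ _
    calc _ ≤ ∫⁻ v in Ioc 0 2, ENNReal.ofReal ((√(2 * L * v * (σ + v)))⁻¹) :=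
          lintegral_mono_set (Ioc_subset_Ioc_right (by linarith))
      _ = (∫⁻ v in Ioc 0 σ, ENNReal.ofReal ((√(2 * L * v * (σ + v)))⁻¹)) +
          ∫⁻ v in Ioc σ 2, ENNReal.ofReal ((√(2 * L * v * (σ + v)))⁻¹) := by
          rw [← Ioc_union_Ioc_eq_Ioc h0.le h2.le, lintegral_union measurableSet_Ioc]
          rw [Set.disjoint_left]; rintro x hx hy; exact absurd hx.2 (not_le.2 hy.1)
      _ ≤ (∫⁻ v in Ioc 0 σ, ENNReal.ofReal ((√(σ * v))⁻¹)) +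
          ∫⁻ v in Ioc σ 2, ENNReal.ofReal (v⁻¹) := by
          apply add_le_add
          · apply setLIntegral_mono' measurableSet_Ioc
            intro v hv
            have hv0 := hv.1
            apply ofReal_le_ofReal
            apply inv_anti₀ (Real.sqrt_pos.2 (by positivity))
            apply Real.sqrt_le_sqrt
            have : 0 < v * (σ + v) := by positivity
            nlinarith
          · apply setLIntegral_mono' measurableSet_Ioc
            intro v hv
            have hv0 : 0 < v := h0.trans hv.1
            apply ofReal_le_ofReal
            apply inv_anti₀ hv0
            apply Real.le_sqrt_of_sq_le
            have : 0 < v * (σ + v) := by positivity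
            nlinarith [mul_pos hv0 h0]
      _ = ENNReal.ofReal 2 + ENNReal.ofReal (Real.log (2 / σ)) := by
          rw [half_pow h0, inv_int h0 h2.le]; norm_num
      _ ≤ _ := by
          have hl : 0 ≤ Real.log (2 / σ) := Real.log_nonneg (by rw [le_div_iff₀ h0]; linarith)
          rw [← ofReal_add (by norm_num) hl]
          apply ofReal_le_ofReal
          rw [Real.log_div (by norm_num) h0.ne']
          have := Real.log_two_lt_d9
          have := neg_abs_le (Real.log σ)
          linarith

lemma FE_key {σ a b : ℝ} (h0 : 0 < σ) (ha : 0 < a) (hab : a ≤ b) (hs : a + b = 4 - σ) :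
    ENNReal.ofReal ((Real.pi * √(a * (σ + b)))⁻¹ * (Real.pi * √(b * (σ + a)))⁻¹) ≤ FE σ a := by
  have hL : 0 < 2 - σ / 2 := by linarith
  have hb : 0 < b := by linarith
  unfold FE
  rw [indicator_of_mem (show a ∈ Ioc 0 (2 - σ / 2) from ⟨ha, by linarith⟩)]
  apply ofReal_le_ofReal
  rw [← mul_inv]
  apply inv_anti₀ (Real.sqrt_pos.2 (by positivity))
  have h1 : √(2 * (2 - σ / 2) * a * (σ + a)) ≤ √(a * (σ + b)) * √(b * (σ + a)) := by
    rw [← Real.sqrt_mul (by positivity)]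
    apply Real.sqrt_le_sqrt
    have h2 : 0 < a * (σ + a) := by positivity
    have h3 : 2 * (2 - σ / 2) ≤ b * (σ + b) := by nlinarith
    nlinarith
  have hp : 1 ≤ Real.pi := by linarith [Real.pi_gt_three]
  have hpp : 1 ≤ Real.pi * Real.pi := by nlinarith
  have h2 : 0 ≤ √(a * (σ + b)) * √(b * (σ + a)) := by positivity
  nlinarith

lemma gg_le {σ : ℝ} (h0 : 0 < σ) (t : ℝ) :
    gE (σ - t) * gE t ≤ FE σ (2 - t) + FE σ (2 - σ + t) := by
  by_cases h1 : 2 ≤ |t|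
  · simp [gE_zero h1]
  by_cases h2 : 2 ≤ |σ - t|
  · simp [gE_zero h2]
  push Not at h1 h2
  rw [abs_lt] at h1 h2
  have e1 : 4 - t ^ 2 = (2 - t) * (σ + (2 - σ + t)) := by ring
  have e2 : 4 - (σ - t) ^ 2 = (2 - σ + t) * (σ + (2 - t)) := by ring
  have hg : ∀ x, 0 ≤ gR x := fun x => by
    have := Real.pi_pos
    unfold gR; positivity
  unfold gE
  rw [← ofReal_mul (hg _)]
  unfold gR
  rw [e1, e2]
  rcases le_total (2 - t) (2 - σ + t) with h | h
  · refine le_trans ?_ le_self_add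
    rw [mul_comm (_⁻¹)]
    exact FE_key h0 (by linarith) h (by ring)
  · refine le_trans ?_ le_add_self
    exact FE_key h0 (by linarith) h (by ring)

lemma R1_pos {σ : ℝ} (h0 : 0 < σ) : RE 1 σ ≤ ENNReal.ofReal (6 * (1 + |Real.log σ|)) := by
  by_cases h4 : 4 ≤ σ
  · rw [RE_support 1 σ (by rw [abs_of_pos h0]; norm_num; linarith)]; exact zero_le
  push Not at h4
  simp only [RE]
  calc _ ≤ ∫⁻ t, (FE σ (2 - t) + FE σ (2 - σ + t)) := lintegral_mono (gg_le h0)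
    _ = (∫⁻ v, FE σ v) + ∫⁻ v, FE σ v := by
        rw [lintegral_add_left (f := fun t => FE σ (2 - t)) ((FE_meas σ).comp (measurable_const.sub measurable_id)),
          lintegral_sub_left_eq_self (FE σ), lintegral_add_left_eq_self]
    _ ≤ ENNReal.ofReal (3 + |Real.log σ|) + ENNReal.ofReal (3 + |Real.log σ|) :=
        add_le_add (FE_int h0 h4) (FE_int h0 h4)
    _ ≤ _ := by
        rw [← ofReal_add (by positivity) (by positivity)]
        apply ofReal_le_ofReal
        linarith [abs_nonneg (Real.log σ)]

lemma gE_neg (t : ℝ) : gE (-t) = gE t := by simp [gE, gR]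

lemma R1_neg (σ : ℝ) : RE 1 (-σ) = RE 1 σ := by
  simp only [RE]
  rw [← lintegral_neg_eq_self]
  congr 1; ext t
  rw [gE_neg, ← gE_neg]
  congr 2; ring

lemma R1_abs (σ : ℝ) : RE 1 |σ| = RE 1 σ := by
  rcases abs_choice σ with h | h <;> rw [h]
  exact R1_neg σ

lemma R1_log {σ : ℝ} (h0 : σ ≠ 0) : RE 1 σ ≤ ENNReal.ofReal (6 * (1 + |Real.log (|σ|⁻¹)|)) := by
  rw [← R1_abs, Real.log_inv, abs_neg]
  exact R1_pos (abs_pos.2 h0)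

lemma R1_cube_pt {σ : ℝ} (h0 : 0 < σ) (h4 : σ ≤ 4) :
    RE 1 σ ^ (3 : ℝ) ≤ ENNReal.ofReal (60 ^ (3 : ℝ)) * ENNReal.ofReal (σ ^ (-(3/4) : ℝ)) := by
  set y := σ ^ (-(1/4) : ℝ) with hy
  have hy0 : 0 < y := Real.rpow_pos_of_pos h0 _
  have hlog : Real.log σ = -4 * Real.log y := by
    rw [hy, Real.log_rpow h0]; ring
  have hy2 : (1/2 : ℝ) ≤ y := by
    have : (1/2 : ℝ) ≤ 4 ^ (-(1/4) : ℝ) := by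
      have h : (4 : ℝ) ^ (-(1/4) : ℝ) = 2 ^ (-(1/2) : ℝ) := by
        rw [show (4 : ℝ) = 2 ^ (2 : ℝ) by norm_num, ← Real.rpow_mul (by norm_num)]; norm_num
      rw [h, show (1/2 : ℝ) = 2 ^ (-1 : ℝ) by rw [Real.rpow_neg_one]; norm_num]
      exact Real.rpow_le_rpow_of_exponent_le (by norm_num) (by norm_num)
    refine this.trans ?_
    exact Real.rpow_le_rpow_of_nonpos h0 h4 (by norm_num)
  have hl1 : Real.log y ≤ y := (Real.log_le_sub_one_of_pos hy0).trans (by linarith)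
  have hl2 : - Real.log y ≤ 2 * y := by
    have := Real.log_le_log (by norm_num) hy2
    rw [one_div, Real.log_inv] at this
    have := Real.log_two_lt_d9
    linarith
  have habs : |Real.log σ| ≤ 8 * y := by
    rw [hlog, abs_le]; constructor <;> linarith
  have hb : RE 1 σ ≤ ENNReal.ofReal (60 * y) :=
    (R1_pos h0).trans (ofReal_le_ofReal (by linarith))
  calc RE 1 σ ^ (3 : ℝ) ≤ ENNReal.ofReal (60 * y) ^ (3 : ℝ) := ENNReal.rpow_le_rpow hb (by norm_num)
    _ = _ := by
      rw [ofReal_rpow_of_pos (by positivity), Real.mul_rpow (by norm_num) hy0.le,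
        ofReal_mul (by positivity), hy, ← Real.rpow_mul h0.le]
      norm_num

/-- cut off power -/
def HE (a : ℝ) : ℝ → ℝ≥0∞ := indicator (Ioc 0 a) fun v => ENNReal.ofReal (v ^ (-(3/4) : ℝ))

lemma HE_meas (a : ℝ) : Measurable (HE a) := by
  unfold HE
  exact Measurable.indicator (by fun_prop) measurableSet_Ioc

lemma HE_int {a : ℝ} (ha : 0 ≤ a) : ∫⁻ v, HE a v ≠ ∞ := by
  unfold HE
  rw [lintegral_indicator measurableSet_Ioc, pow_int (by norm_num) ha]
  exact ofReal_ne_top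

lemma R1_cube : ∫⁻ σ, RE 1 σ ^ (3 : ℝ) ≠ ∞ := by
  have hle : ∫⁻ σ, RE 1 σ ^ (3 : ℝ) ≤
      ∫⁻ σ, ENNReal.ofReal (60 ^ (3 : ℝ)) * (HE 4 σ + HE 4 (-σ)) := by
    apply lintegral_mono_ae
    have h0 : ∀ᵐ σ : ℝ, σ ≠ 0 := Measure.ae_ne volume 0
    filter_upwards [h0] with σ hσ
    by_cases h4 : 4 ≤ |σ|
    · rw [RE_support 1 σ (by norm_num; linarith), ENNReal.zero_rpow_of_pos (by norm_num)]
      exact zero_le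
    push Not at h4
    have h := R1_cube_pt (abs_pos.2 hσ) h4.le
    rw [R1_abs] at h
    refine h.trans (mul_le_mul' le_rfl ?_)
    rcases lt_or_gt_of_ne hσ with hs | hs
    · refine le_trans ?_ le_add_self
      rw [abs_of_neg hs] at h4 ⊢
      unfold HE
      rw [indicator_of_mem (show -σ ∈ Ioc (0:ℝ) 4 from ⟨by linarith, h4.le⟩)]
    · refine le_trans ?_ le_self_add
      rw [abs_of_pos hs] at h4 ⊢
      unfold HE
      rw [indicator_of_mem (show σ ∈ Ioc (0:ℝ) 4 from ⟨by linarith, h4.le⟩)]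
  refine ne_top_of_le_ne_top ?_ hle
  rw [lintegral_const_mul' _ _ ofReal_ne_top, lintegral_add_left (HE_meas 4),
    lintegral_neg_eq_self (HE 4)]
  exact mul_ne_top ofReal_ne_top (add_ne_top.2 ⟨HE_int (by norm_num), HE_int (by norm_num)⟩)

lemma gE_key {t v : ℝ} (hv : v ∈ Ioc (0:ℝ) 2) (h : v ≤ 4 - t ^ 2) :
    gE t ^ (3/2 : ℝ) ≤ HE 2 v := by
  have hv0 := hv.1
  unfold HE
  rw [indicator_of_mem hv]
  have h1 : gR t ≤ v ^ (-(1/2) : ℝ) := by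
    rw [Real.rpow_neg hv.1.le, ← Real.sqrt_eq_rpow]
    unfold gR
    have := Real.sqrt_pos.2 hv.1
    apply inv_anti₀ this
    have h2 := Real.sqrt_le_sqrt h
    have := Real.pi_gt_three
    nlinarith
  calc gE t ^ (3/2 : ℝ) ≤ ENNReal.ofReal (v ^ (-(1/2) : ℝ)) ^ (3/2 : ℝ) :=
        ENNReal.rpow_le_rpow (ofReal_le_ofReal h1) (by norm_num)
    _ = _ := by
        rw [ofReal_rpow_of_pos (by positivity), ← Real.rpow_mul hv0.le]
        norm_num

lemma gE_pow : ∫⁻ t, gE t ^ (3/2 : ℝ) ≠ ∞ := by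
  have hle : ∫⁻ t, gE t ^ (3/2 : ℝ) ≤ ∫⁻ t, (HE 2 (2 - t) + HE 2 (2 + t)) := by
    apply lintegral_mono
    intro t
    simp only
    by_cases h1 : 2 ≤ |t|
    · rw [gE_zero h1, ENNReal.zero_rpow_of_pos (by norm_num)]
      exact zero_le
    push Not at h1
    rw [abs_lt] at h1
    rcases le_total 0 t with h | h
    · exact le_trans (gE_key ⟨by linarith, by linarith⟩ (by nlinarith)) le_self_add
    · exact le_trans (gE_key ⟨by linarith, by linarith⟩ (by nlinarith)) le_add_self
  refine ne_top_of_le_ne_top ?_ hle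
  rw [lintegral_add_left (f := fun t => HE 2 (2 - t)) ((HE_meas 2).comp (measurable_const.sub measurable_id)),
    lintegral_sub_left_eq_self (HE 2), lintegral_add_left_eq_self]
  exact add_ne_top.2 ⟨HE_int (by norm_num), HE_int (by norm_num)⟩

lemma RE_int (n : ℕ) : ∫⁻ s, RE n s ≠ ∞ := by
  have h := torus_int n (fun _ => 1) measurable_const
  simp only [lintegral_const, one_mul] at h
  intro hc
  rw [hc, ENNReal.mul_top] at h
  · exact measure_ne_top _ _ h
  · apply pow_ne_zero
    have := Real.pi_pos
    simp [this]

lemma RE_bdd (n : ℕ) : ∃ M : ℝ≥0∞, M ≠ ∞ ∧ ∀ σ, RE (n + 2) σ ≤ M := by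
  induction n with
  | zero =>
    refine ⟨(∫⁻ σ, RE 1 σ ^ (3 : ℝ)) ^ (1 / 3 : ℝ) * (∫⁻ t, gE t ^ (3/2 : ℝ)) ^ (1 / (3/2) : ℝ),
      mul_ne_top (rpow_ne_top_of_nonneg (by norm_num) R1_cube)
        (rpow_ne_top_of_nonneg (by norm_num) gE_pow), fun σ => ?_⟩
    have hpq : (3 : ℝ).HolderConjugate (3/2) := by
      rw [Real.holderConjugate_iff]; norm_num
    have := ENNReal.lintegral_mul_le_Lp_mul_Lq volume hpq (f := fun t => RE 1 (σ - t)) (g := gE)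
      ((RE_meas 1).comp (measurable_const.sub measurable_id)).aemeasurable gE_meas.aemeasurable
    rw [lintegral_sub_left_eq_self (fun s => RE 1 s ^ (3:ℝ)) σ] at this
    exact this
  | succ n ih =>
    obtain ⟨M, hM, H⟩ := ih
    refine ⟨M * ∫⁻ t, gE t, mul_ne_top hM (RE_int 0), fun σ => ?_⟩
    rw [← lintegral_const_mul' _ _ hM]
    exact lintegral_mono fun t => mul_le_mul' (H _) le_rfl

/-- **Density of states of the lattice Laplacian.**  For `d ≥ 2` there is a nonnegative
density `ρ` with `∫ f ρ = (2π)^{-d} ∫_{𝕋^d} f(ω(ξ)) dξ`, supported on `[-2d, 2d]`,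
bounded for `d ≥ 3`, bounded up to a logarithmic singularity at `0` for `d = 2`,
and bounded below on `[-2d+ε, 2d-ε]`. -/
theorem density_of_states (d : ℕ) (hd : 2 ≤ d) :
    ∃ ρ : ℝ → ℝ, Measurable ρ ∧ (∀ σ, 0 ≤ ρ σ) ∧
      (∀ f : ℝ → ℝ, Continuous f →
        ∫ σ : ℝ, f σ * ρ σ = (((2 * Real.pi) ^ d : ℝ))⁻¹ * ∫ ξ : Torus d, f (omegaT ξ)) ∧
      (∀ σ : ℝ, σ ∉ Set.Icc (-(2 * (d : ℝ))) (2 * (d : ℝ)) → ρ σ = 0) ∧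
      (3 ≤ d → ∃ C : ℝ, ∀ σ, ρ σ ≤ C) ∧
      (d = 2 → ∃ C : ℝ, ∀ σ, ρ σ ≤ C * (1 + |Real.log (|σ|⁻¹)|)) ∧
      (∀ ε : ℝ, 0 < ε →
        ∃ c : ℝ, 0 < c ∧ ∀ σ ∈ Set.Icc (-(2 * (d : ℝ)) + ε) (2 * (d : ℝ) - ε), c ≤ ρ σ) := by
  obtain ⟨n, rfl⟩ : ∃ n, d = n + 1 := ⟨d - 1, by omega⟩
  have hfin : ∀ᵐ σ : ℝ, RE n σ < ∞ := ae_lt_top (RE_meas n) (RE_int n)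
  set ρ : ℝ → ℝ := fun σ => if RE n σ = ∞ then 1 else (RE n σ).toReal with hρ
  have hset : MeasurableSet {σ | RE n σ = ∞} := RE_meas n (measurableSet_singleton _)
  have hae : ∀ᵐ σ : ℝ, ρ σ = (RE n σ).toReal := by
    filter_upwards [hfin] with σ h
    simp [hρ, h.ne]
  have hub : ∀ (σ C : ℝ), 0 ≤ C → RE n σ ≤ ENNReal.ofReal C → ρ σ ≤ C := by
    intro σ C hC h
    have h1 : RE n σ ≠ ∞ := ne_top_of_le_ne_top ofReal_ne_top h
    simp only [hρ, if_neg h1]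
    exact toReal_le_of_le_ofReal hC h
  refine ⟨ρ, Measurable.ite hset measurable_const (RE_meas n).ennreal_toReal, ?_, ?_, ?_, ?_, ?_, ?_⟩
  · intro σ
    simp only [hρ]
    split_ifs
    · norm_num
    · exact toReal_nonneg
  · intro f hf
    have hmap : Measure.map (omegaT : Torus (n + 1) → ℝ) volume =
        (ENNReal.ofReal (2 * Real.pi) ^ (n + 1)) • volume.withDensity (RE n) := by
      refine Measure.ext_of_lintegral _ fun φ hφ => ?_
      rw [lintegral_map hφ omega_meas, torus_int n φ hφ, lintegral_smul_measure,
        lintegral_withDensity_eq_lintegral_mul _ (RE_meas n) hφ, smul_eq_mul]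
      congr 1
      exact lintegral_congr fun s => mul_comm _ _
    have h1 : ∫ ξ : Torus (n + 1), f (omegaT ξ) = ∫ s, f s ∂(Measure.map (omegaT : Torus (n + 1) → ℝ) volume) :=
      (integral_map omega_meas.aemeasurable hf.aestronglyMeasurable).symm
    have hp := Real.pi_pos
    rw [h1, hmap, integral_smul_measure, integral_withDensity_eq_integral_toReal_smul (RE_meas n) hfin,
      toReal_pow, toReal_ofReal (by positivity), smul_eq_mul, ← mul_assoc,
      inv_mul_cancel₀ (by positivity), one_mul]
    apply integral_congr_ae
    filter_upwards [hae] with σ h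
    rw [h, smul_eq_mul, mul_comm]
  · intro σ hσ
    have : RE n σ = 0 := by
      apply RE_support
      by_contra hc
      push Not at hc
      apply hσ
      rw [abs_lt] at hc
      push_cast
      exact ⟨hc.1.le, hc.2.le⟩
    simp [hρ, this]
  · intro h3
    obtain ⟨m, rfl⟩ : ∃ m, n = m + 2 := ⟨n - 2, by omega⟩
    obtain ⟨M, hM, H⟩ := RE_bdd m
    exact ⟨M.toReal, fun σ => hub σ _ toReal_nonneg (by rw [ofReal_toReal hM]; exact H σ)⟩
  · intro h2
    obtain rfl : n = 1 := by omega
    refine ⟨max 6 (ρ 0), fun σ => ?_⟩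
    by_cases h0 : σ = 0
    · subst h0; simp
    · refine (hub σ _ (by positivity) (R1_log h0)).trans ?_
      gcongr
      exact le_max_left _ _
  · intro ε hε
    obtain ⟨c, hc, H⟩ := RE_lower n ε hε
    refine ⟨min c 1, lt_min hc one_pos, fun σ hσ => ?_⟩
    have h := H σ (by
      push_cast at hσ
      rw [abs_le]; exact ⟨by linarith [hσ.1], hσ.2⟩)
    simp only [hρ]
    split_ifs with ht
    · exact min_le_right _ _
    · exact (min_le_left _ _).trans ((ofReal_le_iff_le_toReal ht).1 h)
end
end

section
/- Let H = Δ_L + λV on the finite torus ℤ^d_L and let R = (H − z)^{-1}, M̃ = (Δ_L − (z + λ²θ̃))^{-1} where θ̃ = E R_{00}, and let 𝒟[B] = ∑_x B_{xx}|x⟩⟨x| denote the diagonal part. Then the self-consistent equation E R = M̃ (Id + λ² E[𝒟[R − E R] R]) holds exactly, where E denotes expectation over the Gaussian potential V. -/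
open MeasureTheory ProbabilityTheory Matrix
open scoped Classical

noncomputable section

noncomputable def gaussPi' {ι : Type*} [Fintype ι] : Measure (ι → ℝ) :=
  Measure.pi fun _ : ι => gaussianReal 0 1

/-- The nearest-neighbor Laplacian on the finite torus `ℤ^d_L`. -/
noncomputable def torusLap (d L : ℕ) [NeZero L] :
    Matrix (Fin d → ZMod L) (Fin d → ZMod L) ℂ :=
  Matrix.of fun a b =>
    if ∃ j : Fin d, a = b + Pi.single j 1 ∨ b = a + Pi.single j 1 then 1 else 0

section Helpers

variable {ι : Type*} [Fintype ι] [DecidableEq ι]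

theorem ward_aux (H : Matrix ι ι ℂ) (hH : H.IsHermitian) (w : ℂ) (hw : 0 < w.im) :
    IsUnit (H - w • (1 : Matrix ι ι ℂ)).det := by
  rw [isUnit_iff_ne_zero]
  intro h0
  obtain ⟨v, hv0, hv⟩ := Matrix.exists_mulVec_eq_zero_iff.mpr h0
  apply hv0
  have h1 : star v ⬝ᵥ (H *ᵥ v) = w * (star v ⬝ᵥ v) := by
    have : H *ᵥ v = w • v := by
      rw [Matrix.sub_mulVec, Matrix.smul_mulVec, Matrix.one_mulVec] at hv
      exact sub_eq_zero.mp hv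
    rw [this, dotProduct_smul, smul_eq_mul]
  have h2 : (star v ⬝ᵥ (H *ᵥ v)).im = 0 := hH.im_star_dotProduct_mulVec_self v
  have h3 : (star v ⬝ᵥ v).im = 0 := by
    simp [dotProduct, Complex.mul_im, mul_comm]
  have h4 : (star v ⬝ᵥ v).re = 0 := by
    rw [h1, Complex.mul_im, h3] at h2
    simp at h2
    rcases h2 with h | h
    · exact absurd h hw.ne'
    · exact h
  have h5 : star v ⬝ᵥ v = 0 := Complex.ext h4 h3
  open ComplexOrder in
  exact dotProduct_star_self_eq_zero.mp h5

theorem ward (H : Matrix ι ι ℂ) (hH : H.IsHermitian) (w : ℂ) (hw : 0 < w.im) (b : ι) :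
    ((H - w • (1 : Matrix ι ι ℂ))⁻¹ b b).im
      = w.im * ∑ a, ‖(H - w • (1 : Matrix ι ι ℂ))⁻¹ a b‖ ^ 2 := by
  have hu := ward_aux H hH w hw
  set K := H - w • (1 : Matrix ι ι ℂ) with hK
  set R := K⁻¹ with hR
  have h1 : K * R = 1 := Matrix.mul_nonsing_inv _ hu
  have h1' : Rᴴ * Kᴴ = 1 := by rw [← Matrix.conjTranspose_mul, h1, Matrix.conjTranspose_one]
  have h2 : Kᴴ - K = (w - star w) • (1 : Matrix ι ι ℂ) := by
    rw [hK, Matrix.conjTranspose_sub, hH.eq, Matrix.conjTranspose_smul, Matrix.conjTranspose_one,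
      sub_smul]
    abel
  have h3 : R - Rᴴ = (w - star w) • (Rᴴ * R) := by
    calc R - Rᴴ = (Rᴴ * Kᴴ) * R - Rᴴ * (K * R) := by rw [h1, h1', one_mul, mul_one]
      _ = Rᴴ * (Kᴴ - K) * R := by noncomm_ring
      _ = _ := by rw [h2]; simp
  have h4 := congrFun (congrFun h3 b) b
  simp only [Matrix.sub_apply, Matrix.conjTranspose_apply, Matrix.smul_apply, Matrix.mul_apply,
    smul_eq_mul] at h4
  have h5 : ∑ a, star (R a b) * R a b = ((∑ a, ‖R a b‖ ^ 2 : ℝ) : ℂ) := by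
    push_cast
    refine Finset.sum_congr rfl fun a _ => ?_
    exact Complex.conj_mul' _
  rw [h5] at h4
  have h6 := congrArg Complex.im h4
  simp only [Complex.star_def, Complex.sub_im, Complex.conj_im, Complex.mul_im, Complex.sub_re,
    Complex.conj_re, Complex.ofReal_im, Complex.ofReal_re] at h6
  linarith

theorem res_im_nonneg (H : Matrix ι ι ℂ) (hH : H.IsHermitian) (w : ℂ) (hw : 0 < w.im) (b : ι) :
    0 ≤ ((H - w • (1 : Matrix ι ι ℂ))⁻¹ b b).im := by
  rw [ward H hH w hw]; positivity

theorem res_bound (H : Matrix ι ι ℂ) (hH : H.IsHermitian) (w : ℂ) (hw : 0 < w.im) (a b : ι) :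
    ‖(H - w • (1 : Matrix ι ι ℂ))⁻¹ a b‖ ≤ 1 / w.im := by
  have h := ward H hH w hw b
  set R := (H - w • (1 : Matrix ι ι ℂ))⁻¹
  have hs : ∀ c, ‖R c b‖ ^ 2 ≤ ∑ a, ‖R a b‖ ^ 2 := fun c =>
    Finset.single_le_sum (f := fun a => ‖R a b‖ ^ 2) (fun _ _ => by positivity) (Finset.mem_univ c)
  have him : (R b b).im ≤ ‖R b b‖ := (le_abs_self _).trans (Complex.abs_im_le_norm _)
  have h1 : w.im * ‖R b b‖ ≤ 1 := by
    by_contra hcon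
    push Not at hcon
    have h2 := mul_le_mul_of_nonneg_left (hs b) hw.le
    have : 0 < ‖R b b‖ := by
      by_contra h0
      nlinarith [norm_nonneg (R b b)]
    nlinarith
  have h2 := mul_le_mul_of_nonneg_left (hs a) hw.le
  rw [le_div_iff₀ hw]
  have h3 : (‖R a b‖ * w.im) ^ 2 ≤ 1 ^ 2 := by nlinarith
  exact (sq_le_sq₀ (by positivity) (by norm_num)).mp h3

theorem stein (f f' : ℝ → ℂ) (hd : ∀ x, HasDerivAt f (f' x) x)
    (hf : Integrable f (gaussianReal 0 1)) (hf' : Integrable f' (gaussianReal 0 1))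
    (hxf : Integrable (fun x : ℝ => (x : ℂ) * f x) (gaussianReal 0 1)) :
    ∫ x, (x : ℂ) * f x ∂(gaussianReal 0 1) = ∫ x, f' x ∂(gaussianReal 0 1) := by
  have key : ∀ g : ℝ → ℂ, Integrable g (gaussianReal 0 1) →
      Integrable (fun x => gaussianPDFReal 0 1 x • g x) := by
    intro g hg
    rw [gaussianReal_of_var_ne_zero _ one_ne_zero,
      integrable_withDensity_iff_integrable_smul' (measurable_gaussianPDF 0 1)
        (Filter.Eventually.of_forall fun _ => gaussianPDF_lt_top)] at hg
    simpa using hg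
  have hp : ∀ x, HasDerivAt (gaussianPDFReal 0 1) (-x * gaussianPDFReal 0 1 x) x := by
    intro x
    have h1 : HasDerivAt (fun x : ℝ => (√(2 * Real.pi * ((1 : NNReal) : ℝ)))⁻¹
        * Real.exp (-(x - 0) ^ 2 / (2 * ((1 : NNReal) : ℝ)))) _ x :=
      HasDerivAt.const_mul _ (((((hasDerivAt_id x).sub_const 0).pow 2).neg.div_const _).exp)
    have h2 := gaussianPDFReal_def 0 1
    rw [h2]
    refine h1.congr_deriv ?_
    simp
    ring
  have h0 := integral_eq_zero_of_hasDerivAt_of_integrable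
    (f := fun x => gaussianPDFReal 0 1 x • f x)
    (f' := fun x => gaussianPDFReal 0 1 x • (f' x - (x : ℂ) * f x)) ?_ ?_ (key f hf)
  · rw [← integral_gaussianReal_eq_integral_smul one_ne_zero, integral_sub hf' hxf] at h0
    exact (sub_eq_zero.mp h0).symm
  · intro x
    refine ((hp x).smul (hd x)).congr_deriv ?_
    simp only [Complex.real_smul]
    push_cast
    ring
  · exact key (fun x => f' x - (x : ℂ) * f x) (hf'.sub hxf)

instance : IsProbabilityMeasure (gaussPi' (ι := ι)) := by
  unfold gaussPi'; infer_instance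

theorem mp_update (a : ι) :
    MeasurePreserving (fun p : (ι → ℝ) × ℝ => Function.update p.1 a p.2)
      ((gaussPi' (ι := ι)).prod (gaussianReal 0 1)) (gaussPi' (ι := ι)) := by
  have hm : Measurable (fun p : (ι → ℝ) × ℝ => Function.update p.1 a p.2) := by
    rw [measurable_pi_iff]
    intro i
    by_cases h : i = a
    · subst h; simpa using measurable_snd
    · simp only [Function.update_of_ne h]; fun_prop
  refine ⟨hm, ?_⟩
  symm
  refine Measure.pi_eq fun s hs => ?_
  rw [Measure.map_apply hm (MeasurableSet.univ_pi hs)]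
  have : (fun p : (ι → ℝ) × ℝ => Function.update p.1 a p.2) ⁻¹' (Set.univ.pi s)
      = (Set.univ.pi (Function.update s a Set.univ)) ×ˢ s a := by
    ext p
    simp only [Set.mem_preimage, Set.mem_pi, Set.mem_univ, true_imp_iff, Set.mem_prod]
    constructor
    · intro h
      refine ⟨fun i => ?_, by simpa using h a⟩
      by_cases hi : i = a
      · subst hi; simp
      · simpa [hi] using h i
    · rintro ⟨h1, h2⟩ i
      by_cases hi : i = a
      · subst hi; simpa using h2
      · simpa [hi] using h1 i
  rw [this, Measure.prod_prod, gaussPi', Measure.pi_pi, ← Finset.mul_prod_erase _ _ (Finset.mem_univ a),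
    ← Finset.mul_prod_erase (a := a) Finset.univ _ (Finset.mem_univ a)]
  simp only [Function.update_self, measure_univ, one_mul]
  rw [mul_comm]
  congr 1
  refine Finset.prod_congr rfl fun i hi => ?_
  rw [Function.update_of_ne (Finset.ne_of_mem_erase hi)]

theorem mp_perm (σ : ι ≃ ι) :
    MeasurePreserving (fun g : ι → ℝ => fun i => g (σ i)) (gaussPi' (ι := ι)) (gaussPi' (ι := ι)) := by
  have hm : Measurable (fun g : ι → ℝ => fun i => g (σ i)) := by fun_prop
  refine ⟨hm, ?_⟩
  symm
  refine Measure.pi_eq fun s hs => ?_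
  rw [Measure.map_apply hm (MeasurableSet.univ_pi hs)]
  have : (fun g : ι → ℝ => fun i => g (σ i)) ⁻¹' (Set.univ.pi s)
      = Set.univ.pi (fun i => s (σ.symm i)) := by
    ext g
    simp only [Set.mem_preimage, Set.mem_pi, Set.mem_univ, true_imp_iff]
    exact ⟨fun h i => by simpa using h (σ.symm i), fun h i => by simpa using h (σ i)⟩
  rw [this, gaussPi', Measure.pi_pi]
  exact Equiv.prod_comp σ.symm fun i => (gaussianReal 0 1) (s i)

/-- The resolvent as a function of the potential. -/
def resv (A : Matrix ι ι ℂ) (lam : ℝ) (z : ℂ) (g : ι → ℝ) : Matrix ι ι ℂ :=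
  (A + (lam : ℂ) • Matrix.diagonal (fun i => ((g i : ℝ) : ℂ)) - z • (1 : Matrix ι ι ℂ))⁻¹

theorem herm_pot (A : Matrix ι ι ℂ) (hA : A.IsHermitian) (lam : ℝ) (g : ι → ℝ) :
    (A + (lam : ℂ) • Matrix.diagonal (fun i => ((g i : ℝ) : ℂ))).IsHermitian := by
  refine hA.add ?_
  rw [Matrix.IsHermitian, Matrix.conjTranspose_smul, Matrix.diagonal_conjTranspose]
  congr 1
  · simp
  · congr 1; ext i; simp

variable (A : Matrix ι ι ℂ) (hA : A.IsHermitian) (lam : ℝ) (z : ℂ) (hz : 0 < z.im)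

theorem resv_bound (hA : A.IsHermitian) (hz : 0 < z.im) (g : ι → ℝ) (a b : ι) :
    ‖resv A lam z g a b‖ ≤ 1 / z.im :=
  res_bound _ (herm_pot A hA lam g) z hz a b

theorem resv_cont (hA : A.IsHermitian) (hz : 0 < z.im) (a b : ι) :
    Continuous fun g => resv A lam z g a b := by
  have hc : Continuous fun g : ι → ℝ =>
      (A + (lam : ℂ) • Matrix.diagonal (fun i => ((g i : ℝ) : ℂ)) - z • (1 : Matrix ι ι ℂ)) := by
    fun_prop
  have : (fun g => resv A lam z g a b) = fun g =>
      ((A + (lam : ℂ) • Matrix.diagonal (fun i => ((g i : ℝ) : ℂ)) - z • (1 : Matrix ι ι ℂ)).det)⁻¹ *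
      (A + (lam : ℂ) • Matrix.diagonal (fun i => ((g i : ℝ) : ℂ))
        - z • (1 : Matrix ι ι ℂ)).adjugate a b := by
    ext g
    rw [resv, Matrix.inv_def, Ring.inverse_eq_inv, Matrix.smul_apply, smul_eq_mul]
  rw [this]
  refine (hc.matrix_det.inv₀ fun g => ?_).mul (hc.matrix_adjugate.matrix_elem a b)
  exact (ward_aux _ (herm_pot A hA lam g) z hz).ne_zero

/-- The resolvent identity. -/
theorem resv_diff (hA : A.IsHermitian) (hz : 0 < z.im) (g : ι → ℝ) (a b : ι) (s t : ℝ) :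
    resv A lam z (Function.update g a s) a b - resv A lam z (Function.update g a t) a b
      = -((lam : ℂ) * ((s : ℂ) - t)) * (resv A lam z (Function.update g a s) a a
          * resv A lam z (Function.update g a t) a b) := by
  have us := ward_aux _ (herm_pot A hA lam (Function.update g a s)) z hz
  have ut := ward_aux _ (herm_pot A hA lam (Function.update g a t)) z hz
  unfold resv
  set S := A + (lam : ℂ) • Matrix.diagonal (fun i => ((Function.update g a s i : ℝ) : ℂ))
    - z • (1 : Matrix ι ι ℂ) with hS
  set T := A + (lam : ℂ) • Matrix.diagonal (fun i => ((Function.update g a t i : ℝ) : ℂ))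
    - z • (1 : Matrix ι ι ℂ) with hT
  have hTS : T - S = Matrix.diagonal (Pi.single a ((lam : ℂ) * ((t : ℂ) - s))) := by
    ext i j
    by_cases hij : i = j
    · subst hij
      by_cases hi : i = a
      · subst hi; simp [hS, hT]; ring
      · simp [hS, hT, hi]
    · simp [hS, hT, hij]
  have h : S⁻¹ - T⁻¹ = S⁻¹ * (T - S) * T⁻¹ := by
    rw [mul_sub, sub_mul, mul_assoc, Matrix.mul_nonsing_inv _ ut, Matrix.nonsing_inv_mul _ us,
      mul_one, one_mul]
  have h2 := congrFun (congrFun h a) b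
  rw [hTS, Matrix.mul_apply] at h2
  simp only [Matrix.mul_diagonal, Matrix.sub_apply] at h2
  rw [h2, Finset.sum_eq_single a]
  · simp; ring
  · intro c _ hc; simp [hc]
  · simp

theorem resv_deriv (hA : A.IsHermitian) (hz : 0 < z.im) (g : ι → ℝ) (a b : ι) (t : ℝ) :
    HasDerivAt (fun s : ℝ => resv A lam z (Function.update g a s) a b)
      (-(lam : ℂ) * (resv A lam z (Function.update g a t) a a
          * resv A lam z (Function.update g a t) a b)) t := by
  rw [hasDerivAt_iff_tendsto_slope]
  have hc : Continuous fun s : ℝ => -(lam : ℂ) * (resv A lam z (Function.update g a s) a a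
          * resv A lam z (Function.update g a t) a b) := by
    have := (resv_cont A lam z hA hz a a).comp (continuous_const.update a continuous_id : Continuous fun s : ℝ => Function.update g a s)
    exact continuous_const.mul (Continuous.mul this continuous_const)
  refine ((hc.tendsto t).mono_left nhdsWithin_le_nhds).congr' ?_
  filter_upwards [self_mem_nhdsWithin] with s hs
  have hne : (s : ℂ) - t ≠ 0 := by
    rw [sub_ne_zero]; exact_mod_cast hs
  rw [slope_def_module, resv_diff A lam z hA hz, Complex.real_smul]
  push_cast
  field_simp

theorem resv_integrable (hA : A.IsHermitian) (hz : 0 < z.im) (a b : ι) :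
    Integrable (fun g => resv A lam z g a b) (gaussPi' (ι := ι)) :=
  Integrable.of_bound (resv_cont A lam z hA hz a b).aestronglyMeasurable (1 / z.im)
    (Filter.Eventually.of_forall fun g => resv_bound A lam z hA hz g a b)

theorem resv_integrable_mul (hA : A.IsHermitian) (hz : 0 < z.im) (a b c d : ι) :
    Integrable (fun g => resv A lam z g a b * resv A lam z g c d) (gaussPi' (ι := ι)) :=
  (resv_integrable A lam z hA hz c d).bdd_mul
    (resv_cont A lam z hA hz a b).aestronglyMeasurable
    (Filter.Eventually.of_forall fun g => resv_bound A lam z hA hz g a b)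

theorem id_integrable : Integrable (fun x : ℝ => (x : ℂ)) (gaussianReal 0 1) := by
  have h := (memLp_id_gaussianReal (μ := 0) (v := 1) 1).integrable (by simp)
  exact h.ofReal

theorem coord_integrable (hA : A.IsHermitian) (hz : 0 < z.im) (a b c : ι) :
    Integrable (fun g => ((g a : ℝ) : ℂ) * resv A lam z g b c) (gaussPi' (ι := ι)) := by
  have hmp : MeasurePreserving (fun g : ι → ℝ => g a) (gaussPi' (ι := ι)) (gaussianReal 0 1) :=
    measurePreserving_eval (fun _ : ι => gaussianReal 0 1) a
  have h := hmp.integrable_comp_of_integrable id_integrable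
  exact h.mul_bdd (resv_cont A lam z hA hz b c).aestronglyMeasurable
    (Filter.Eventually.of_forall fun g => resv_bound A lam z hA hz g b c)

/-- Gaussian integration by parts. -/
theorem resv_ibp (hA : A.IsHermitian) (hz : 0 < z.im) (a b : ι) :
    ∫ g, ((g a : ℝ) : ℂ) * resv A lam z g a b ∂(gaussPi' (ι := ι))
      = -(lam : ℂ) * ∫ g, resv A lam z g a a * resv A lam z g a b ∂(gaussPi' (ι := ι)) := by
  have fub : ∀ F : (ι → ℝ) → ℂ, Integrable F (gaussPi' (ι := ι)) →
      ∫ g, F g ∂(gaussPi' (ι := ι)) =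
        ∫ g, ∫ t, F (Function.update g a t) ∂(gaussianReal 0 1) ∂(gaussPi' (ι := ι)) := by
    intro F hF
    have h := mp_update a
    have h2 := integral_prod _ (h.integrable_comp_of_integrable hF)
    refine Eq.trans ?_ h2
    conv_lhs => rw [← h.map_eq]
    rw [integral_map h.measurable.aemeasurable
      (by rw [h.map_eq]; exact hF.aestronglyMeasurable)]
    rfl
  have hcu : ∀ g : ι → ℝ, Continuous fun s : ℝ => Function.update g a s := fun g =>
    continuous_const.update a continuous_id
  have hci : ∀ (g : ι → ℝ) (c : ι), Integrable (fun s : ℝ => resv A lam z (Function.update g a s) a c)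
      (gaussianReal 0 1) := fun g c =>
    Integrable.of_bound ((resv_cont A lam z hA hz a c).comp (hcu g)).aestronglyMeasurable (1 / z.im)
      (Filter.Eventually.of_forall fun s => resv_bound A lam z hA hz _ a c)
  rw [← integral_const_mul, fub _ (coord_integrable A lam z hA hz a a b),
    fub _ ((resv_integrable_mul A lam z hA hz a a a b).const_mul _)]
  refine integral_congr_ae (Filter.Eventually.of_forall fun g => ?_)
  simp only [Function.update_self]
  refine stein _ _ (fun t => resv_deriv A lam z hA hz g a b t) (hci g b) ?_ ?_
  · refine Integrable.const_mul ?_ _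
    exact (hci g b).bdd_mul ((resv_cont A lam z hA hz a a).comp (hcu g)).aestronglyMeasurable
      (Filter.Eventually.of_forall fun s => resv_bound A lam z hA hz _ a a)
  · exact id_integrable.mul_bdd
      ((resv_cont A lam z hA hz a b).comp (hcu g)).aestronglyMeasurable
      (Filter.Eventually.of_forall fun s => resv_bound A lam z hA hz _ a b)

/-- Invariance of the expected resolvent under symmetries of `A`. -/
theorem resv_perm (σ : ι ≃ ι) (hσ : A.submatrix σ σ = A) (hA : A.IsHermitian) (hz : 0 < z.im)
    (a b : ι) :
    ∫ g, resv A lam z g (σ a) (σ b) ∂(gaussPi' (ι := ι))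
      = ∫ g, resv A lam z g a b ∂(gaussPi' (ι := ι)) := by
  have h1 : ∀ g : ι → ℝ, resv A lam z g (σ a) (σ b) = resv A lam z (fun i => g (σ i)) a b := by
    intro g
    have : (A + (lam : ℂ) • Matrix.diagonal (fun i => ((g i : ℝ) : ℂ))
        - z • (1 : Matrix ι ι ℂ)).submatrix σ σ
      = A + (lam : ℂ) • Matrix.diagonal (fun i => ((g (σ i) : ℝ) : ℂ))
        - z • (1 : Matrix ι ι ℂ) := by
      conv_rhs => rw [← hσ]
      ext i j
      simp [Matrix.diagonal_apply, Matrix.one_apply]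
    rw [resv, resv, ← this, Matrix.inv_submatrix_equiv, Matrix.submatrix_apply]
  simp_rw [h1]
  have h := mp_perm σ
  conv_rhs => rw [← h.map_eq]
  rw [integral_map h.measurable.aemeasurable
    (by rw [h.map_eq]; exact (resv_integrable A lam z hA hz a b).aestronglyMeasurable)]

end Helpers

theorem torusLap_herm (d L : ℕ) [NeZero L] : (torusLap d L).IsHermitian := by
  ext a b
  simp only [Matrix.conjTranspose_apply, torusLap, Matrix.of_apply]
  have : (∃ j : Fin d, b = a + Pi.single j 1 ∨ a = b + Pi.single j 1) ↔
      (∃ j : Fin d, a = b + Pi.single j 1 ∨ b = a + Pi.single j 1) :=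
    exists_congr fun j => or_comm
  by_cases h : ∃ j : Fin d, a = b + Pi.single j 1 ∨ b = a + Pi.single j 1
  · rw [if_pos h, if_pos (this.mpr h)]; simp
  · rw [if_neg h, if_neg (fun h' => h (this.mp h'))]; simp

theorem torusLap_inv (d L : ℕ) [NeZero L] (x : Fin d → ZMod L) :
    (torusLap d L).submatrix (Equiv.addRight x) (Equiv.addRight x) = torusLap d L := by
  ext a b
  simp only [Matrix.submatrix_apply, torusLap, Matrix.of_apply, Equiv.coe_addRight]
  have : (∃ j : Fin d, a + x = b + x + Pi.single j 1 ∨ b + x = a + x + Pi.single j 1) ↔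
      (∃ j : Fin d, a = b + Pi.single j 1 ∨ b = a + Pi.single j 1) := by
    refine exists_congr fun j => ?_
    rw [add_right_comm b, add_right_comm a, add_left_inj, add_left_inj]
  by_cases h : ∃ j : Fin d, a = b + Pi.single j 1 ∨ b = a + Pi.single j 1
  · rw [if_pos h, if_pos (this.mpr h)]
  · rw [if_neg h, if_neg (fun h' => h (this.mp h'))]

/-- **The self-consistent equation for `E R`.**  With `H = Δ_L + λV`, `R = (H-z)⁻¹`,
`θ̃ = E R_{00}`, `M̃ = (Δ_L - (z+λ²θ̃))⁻¹`, and `𝒟` the diagonal-part superoperator: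
`E R = M̃ (Id + λ² E[𝒟[R - E R] R])` exactly. -/
theorem self_consistent_equation (d L : ℕ) [NeZero L]
    (lam : ℝ) (hlam : 0 < lam) (z : ℂ) (hz : 0 < z.im) :
    let R : ((Fin d → ZMod L) → ℝ) → Matrix (Fin d → ZMod L) (Fin d → ZMod L) ℂ :=
      fun g => (torusLap d L + (lam : ℂ) • Matrix.diagonal (fun i => ((g i : ℝ) : ℂ))
        - z • (1 : Matrix (Fin d → ZMod L) (Fin d → ZMod L) ℂ))⁻¹
    let ER : Matrix (Fin d → ZMod L) (Fin d → ZMod L) ℂ :=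
      Matrix.of fun a b => ∫ g, R g a b ∂(gaussPi' (ι := (Fin d → ZMod L)))
    let Mt : Matrix (Fin d → ZMod L) (Fin d → ZMod L) ℂ :=
      (torusLap d L - (z + (lam : ℂ) ^ 2 * ER 0 0)
          • (1 : Matrix (Fin d → ZMod L) (Fin d → ZMod L) ℂ))⁻¹
    let Err : Matrix (Fin d → ZMod L) (Fin d → ZMod L) ℂ :=
      Matrix.of fun a b =>
        ∫ g, ((Matrix.diagonal fun x => R g x x - ER x x) * R g) a b
          ∂(gaussPi' (ι := (Fin d → ZMod L)))
    ER = Mt * ((1 : Matrix (Fin d → ZMod L) (Fin d → ZMod L) ℂ) + (lam : ℂ) ^ 2 • Err) := by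
  intro R ER Mt Err
  have hA := torusLap_herm d L
  set A := torusLap d L with hAdef
  have hR : ∀ g, R g = resv A lam z g := fun g => rfl
  have hER : ∀ a b, ER a b = ∫ g, resv A lam z g a b ∂(gaussPi' (ι := (Fin d → ZMod L))) :=
    fun a b => rfl
  have hdiag : ∀ x, ER x x = ER 0 0 := by
    intro x
    have h := resv_perm A lam z (Equiv.addRight x) (torusLap_inv d L x) hA hz 0 0
    simpa [hER] using h
  have hErr : ∀ a b, Err a b =
      ∫ g, resv A lam z g a a * resv A lam z g a b ∂(gaussPi' (ι := (Fin d → ZMod L)))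
        - ER 0 0 * ER a b := by
    intro a b
    have : Err a b = ∫ g, (resv A lam z g a a * resv A lam z g a b
        - ER 0 0 * resv A lam z g a b) ∂(gaussPi' (ι := (Fin d → ZMod L))) := by
      refine integral_congr_ae (Filter.Eventually.of_forall fun g => ?_)
      simp only [Matrix.diagonal_mul, hR, hdiag, sub_mul]
    rw [this, integral_sub (resv_integrable_mul A lam z hA hz a a a b)
      ((resv_integrable A lam z hA hz a b).const_mul _), integral_const_mul, ← hER]
  have him : 0 ≤ (ER 0 0).im := by
    have h := integral_im (resv_integrable A lam z hA hz 0 0)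
    have h' : (ER 0 0).im = ∫ g, (resv A lam z g 0 0).im
        ∂(gaussPi' (ι := (Fin d → ZMod L))) := by
      rw [hER]; exact h.symm
    rw [h']
    exact integral_nonneg fun g => res_im_nonneg _ (herm_pot A hA lam g) z hz 0
  have hw : 0 < (z + (lam : ℂ) ^ 2 * ER 0 0).im := by
    have : ((lam : ℂ) ^ 2 * ER 0 0).im = lam ^ 2 * (ER 0 0).im := by
      rw [← Complex.ofReal_pow, Complex.im_ofReal_mul]
    rw [Complex.add_im, this]
    positivity
  have hu := ward_aux A hA _ hw
  have main : (A - (z + (lam : ℂ) ^ 2 * ER 0 0)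
      • (1 : Matrix (Fin d → ZMod L) (Fin d → ZMod L) ℂ)) * ER
      = 1 + (lam : ℂ) ^ 2 • Err := by
    ext a b
    have hpt : ∀ g, ∑ c, A a c * resv A lam z g c b
        + (lam : ℂ) * (((g a : ℝ) : ℂ) * resv A lam z g a b) - z * resv A lam z g a b
        = (1 : Matrix (Fin d → ZMod L) (Fin d → ZMod L) ℂ) a b := by
      intro g
      have h := Matrix.mul_nonsing_inv _ (ward_aux _ (herm_pot A hA lam g) z hz)
      change _ * resv A lam z g = 1 at h
      rw [← h]
      rw [Matrix.sub_mul, Matrix.add_mul, Matrix.sub_apply, Matrix.add_apply, Matrix.smul_mul,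
        Matrix.smul_mul, one_mul, Matrix.smul_apply, Matrix.smul_apply, Matrix.diagonal_mul,
        Matrix.mul_apply, smul_eq_mul, smul_eq_mul]
    have hint : ∫ g, (∑ c, A a c * resv A lam z g c b
        + (lam : ℂ) * (((g a : ℝ) : ℂ) * resv A lam z g a b) - z * resv A lam z g a b)
          ∂(gaussPi' (ι := (Fin d → ZMod L)))
        = (1 : Matrix (Fin d → ZMod L) (Fin d → ZMod L) ℂ) a b := by
      simp_rw [hpt]
      simp
    have i1 : ∀ c ∈ Finset.univ, Integrable (fun g => A a c * resv A lam z g c b)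
        (gaussPi' (ι := (Fin d → ZMod L))) := fun c _ =>
      (resv_integrable A lam z hA hz c b).const_mul _
    have i2 := (coord_integrable A lam z hA hz a a b).const_mul (lam : ℂ)
    have i12 : Integrable (fun g => ∑ c, A a c * resv A lam z g c b
        + (lam : ℂ) * (((g a : ℝ) : ℂ) * resv A lam z g a b))
        (gaussPi' (ι := (Fin d → ZMod L))) := (integrable_finsetSum _ i1).add i2
    rw [integral_sub i12
      ((resv_integrable A lam z hA hz a b).const_mul _),
      integral_add (integrable_finsetSum _ i1) i2, integral_finsetSum _ i1,
      integral_const_mul, integral_const_mul, resv_ibp A lam z hA hz] at hint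
    simp_rw [integral_const_mul, ← hER] at hint
    rw [Matrix.sub_mul, Matrix.sub_apply, Matrix.smul_mul, one_mul, Matrix.smul_apply,
      Matrix.add_apply, Matrix.smul_apply, hErr, Matrix.mul_apply, ← hint, smul_eq_mul, smul_eq_mul]
    ring
  change ER = (A - (z + (lam : ℂ) ^ 2 * ER 0 0)
      • (1 : Matrix (Fin d → ZMod L) (Fin d → ZMod L) ℂ))⁻¹ * _
  rw [← main, ← mul_assoc, Matrix.nonsing_inv_mul _ hu, one_mul]
end
end
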